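/- arXiv:0907.5030 — 2 statements merged into one kernel-verified Lean document; each statement's English description precedes it below -/
import Mathlib

section
/- There exists a finite ground set X and an Ingletonian polymatroid (X, h) that is not cc-representable, i.e., h does not lie in the closure of the convex cone generated by the set Υ[X] of representable rank functions on X. Consequently, there exist linear inequalities satisfied by all representable polymatroids on X that are not implied by the polymatroid axioms together with Ingleton's inequalities. -/
/-!
Five subspaces `a, b, c, d, e` of a vector space satisfy
`I(a;b) ≤ I(a;b|c) + I(a;b|d) + I(c;d|e) + I(a;e)`
(Dougherty, Freiling, Zeger), because `a ⊓ b` carries all of the mutual information of `a` and `b`.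
The inequality extends to the closed convex cone generated by the representable rank functions.

A violation imitates an impossible configuration in dimension `5`: lines (rank `2`) `a`, `b` meet in
a point `p`, planes (rank `3`) `c`, `d` meet in `p` alone, and the plane `e` meets each of `c`, `d`
in a line but misses `a`. The two lines in `e` would have to meet, in a point of `c ⊓ d`, so in `p`,
which is on `a`.

These ranks still obey Ingleton's inequalities. Adjoining an element that lies in at least two of
the sets `A₁, A₂, A₃, A₄` to all of them does not increase `J(A₁, A₂, A₃, A₄)`, so only sunflowers
(quadruples with equal pairwise intersections) have to be tested, and on five points these are few.
-/

open Module Filter Topology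

/-- A representation of a rank function on ground set `X` by subspaces of a
finite-dimensional vector space `W` over a finite field `F`. -/
structure SubspaceRep {X : Type} (h : Finset X → ℝ) where
  F : Type
  W : Type
  [fieldF : Field F]
  [fintypeF : Fintype F]
  [addCommGroupW : AddCommGroup W]
  [moduleW : Module F W]
  [finiteDimensionalW : FiniteDimensional F W]
  V : X → Submodule F W
  rank_eq : ∀ A : Finset X, h A = (Module.finrank F ↥(A.sup V) : ℝ)

/-- `h` is representable: it is `q`-representable for some prime power `q`
(equivalently, it is given by subspace dimensions over some finite field). -/
def IsRepresentable {X : Type} (h : Finset X → ℝ) : Prop := Nonempty (SubspaceRep h)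

/-- `h` is even representable: `2^m`-representable for some positive integer `m`. -/
def EvenRepresentable {X : Type} (h : Finset X → ℝ) : Prop :=
  ∃ (r : SubspaceRep h) (m : ℕ), 0 < m ∧ Nat.card r.F = 2 ^ m

/-- `h` is odd representable: `p^m`-representable for some odd prime `p` and positive `m`. -/
def OddRepresentable {X : Type} (h : Finset X → ℝ) : Prop :=
  ∃ (r : SubspaceRep h) (p m : ℕ), p.Prime ∧ Odd p ∧ 0 < m ∧ Nat.card r.F = p ^ m

/-- Polymatroid axioms: normalization, nonnegativity, monotonicity, submodularity. -/
def IsPolymatroid {X : Type} [DecidableEq X] (h : Finset X → ℝ) : Prop :=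
  h ∅ = 0 ∧ (∀ A, 0 ≤ h A) ∧ (∀ A B : Finset X, A ⊆ B → h A ≤ h B) ∧
    ∀ A B : Finset X, h (A ∪ B) + h (A ∩ B) ≤ h A + h B

/-- The Ingleton expression `J_h(A1,A2,A3,A4)`. -/
noncomputable def ingletonJ {X : Type} [DecidableEq X] (h : Finset X → ℝ)
    (A1 A2 A3 A4 : Finset X) : ℝ :=
  h (A1 ∪ A2) + h (A1 ∪ A3) + h (A1 ∪ A4) + h (A2 ∪ A3) + h (A2 ∪ A4)
    - h A1 - h A2 - h (A3 ∪ A4) - h (A1 ∪ A2 ∪ A3) - h (A1 ∪ A2 ∪ A4)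

/-- `h` is Ingletonian if all Ingleton expressions are nonnegative. -/
def IsIngletonian {X : Type} [DecidableEq X] (h : Finset X → ℝ) : Prop :=
  ∀ A1 A2 A3 A4 : Finset X, 0 ≤ ingletonJ h A1 A2 A3 A4

/-- The convex cone generated by a set `S` of rank functions (viewed as points of
`ℝ^{2^|X|}`): all finite nonnegative combinations of elements of `S`. -/
def coneHull {X : Type} (S : Set (Finset X → ℝ)) : Set (Finset X → ℝ) :=
  {x | ∃ (m : ℕ) (c : Fin m → ℝ) (f : Fin m → Finset X → ℝ),
    (∀ i, 0 ≤ c i) ∧ (∀ i, f i ∈ S) ∧ x = ∑ i, c i • f i}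

/-- `h` is almost representable: a coordinatewise limit `h = lim_i c_i g_i` with
`c_i > 0` and each `g_i` representable. -/
def AlmostRepresentable {X : Type} (h : Finset X → ℝ) : Prop :=
  ∃ (g : ℕ → Finset X → ℝ) (c : ℕ → ℝ), (∀ i, IsRepresentable (g i)) ∧
    (∀ i, 0 < c i) ∧ ∀ A : Finset X, Tendsto (fun i => c i * g i A) atTop (𝓝 (h A))

/-- `h` is almost even representable. -/
def AlmostEvenRepresentable {X : Type} (h : Finset X → ℝ) : Prop :=
  ∃ (g : ℕ → Finset X → ℝ) (c : ℕ → ℝ), (∀ i, EvenRepresentable (g i)) ∧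
    (∀ i, 0 < c i) ∧ ∀ A : Finset X, Tendsto (fun i => c i * g i A) atTop (𝓝 (h A))

/-- `h` is almost odd representable. -/
def AlmostOddRepresentable {X : Type} (h : Finset X → ℝ) : Prop :=
  ∃ (g : ℕ → Finset X → ℝ) (c : ℕ → ℝ), (∀ i, OddRepresentable (g i)) ∧
    (∀ i, 0 < c i) ∧ ∀ A : Finset X, Tendsto (fun i => c i * g i A) atTop (𝓝 (h A))

/-- `h` is cc-representable: it lies in the closure of the convex cone generated by
the set `Υ[X]` of representable rank functions on `X`. -/
def CcRepresentable {X : Type} (h : Finset X → ℝ) : Prop :=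
  h ∈ closure (coneHull {g : Finset X → ℝ | IsRepresentable g})

/-- A matroid: an integer-valued polymatroid with `h(A) ≤ |A|`. -/
def IsIntMatroid {X : Type} [DecidableEq X] (h : Finset X → ℝ) : Prop :=
  IsPolymatroid h ∧ (∀ A : Finset X, ∃ z : ℤ, h A = (z : ℝ)) ∧ ∀ A : Finset X, h A ≤ A.card

/-- A circuit of a matroid: a minimal dependent set. -/
def IsCircuit {X : Type} (h : Finset X → ℝ) (C : Finset X) : Prop :=
  h C < C.card ∧ ∀ D : Finset X, D ⊂ C → h D = D.card

/-- A connected matroid: every pair of distinct elements lies in a common circuit. -/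
def IsConnectedMatroid {X : Type} [DecidableEq X] (h : Finset X → ℝ) : Prop :=
  IsIntMatroid h ∧ ∀ x y : X, x ≠ y → ∃ C : Finset X, IsCircuit h C ∧ x ∈ C ∧ y ∈ C

section SubmodularRank

variable {α : Type*} [Lattice α]

/-- A monotone submodular function on a lattice: the common generalization of a polymatroid (on the
lattice of subsets) and of the dimension function (on the lattice of subspaces). -/
structure IsSubmodularRank (ρ : α → ℝ) : Prop where
  monotone : Monotone ρ
  submodular : ∀ a b, ρ (a ⊔ b) + ρ (a ⊓ b) ≤ ρ a + ρ b

/-- The conditional mutual information `I(a;b|c)`, as a continuous linear functional of the rank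
function. The unconditional `I(a;b)` is the case `c = ⊥`. -/
noncomputable def condMutualInfo (a b c : α) : (α → ℝ) →L[ℝ] ℝ :=
  .proj (a ⊔ c) + .proj (b ⊔ c) - .proj (a ⊔ b ⊔ c) - .proj c

/-- The difference of the two sides of the Dougherty–Freiling–Zeger inequality
`I(a;b) ≤ I(a;b|c) + I(a;b|d) + I(c;d|e) + I(a;e)`. -/
noncomputable def dfzFunctional [OrderBot α] (a b c d e : α) : (α → ℝ) →L[ℝ] ℝ :=
  condMutualInfo a b c + condMutualInfo a b d + condMutualInfo c d e + condMutualInfo a e ⊥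
    - condMutualInfo a b ⊥

theorem condMutualInfo_apply (a b c : α) (ρ : α → ℝ) :
    condMutualInfo a b c ρ = ρ (a ⊔ c) + ρ (b ⊔ c) - ρ (a ⊔ b ⊔ c) - ρ c := rfl

theorem condMutualInfo_bot_apply [OrderBot α] (a b : α) (ρ : α → ℝ) :
    condMutualInfo a b ⊥ ρ = ρ a + ρ b - ρ (a ⊔ b) - ρ ⊥ := by
  simp only [condMutualInfo_apply, sup_bot_eq]

theorem dfzFunctional_apply [OrderBot α] (a b c d e : α) (ρ : α → ℝ) :
    dfzFunctional a b c d e ρ = condMutualInfo a b c ρ + condMutualInfo a b d ρ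
      + condMutualInfo c d e ρ + condMutualInfo a e ⊥ ρ - condMutualInfo a b ⊥ ρ := rfl

theorem dfzFunctional_comp [OrderBot α] {β : Type*} [Lattice β] [OrderBot β] (f : SupBotHom α β)
    (ρ : β → ℝ) (a b c d e : α) :
    dfzFunctional a b c d e (ρ ∘ f) = dfzFunctional (f a) (f b) (f c) (f d) (f e) ρ := by
  simp only [dfzFunctional_apply, condMutualInfo_apply, Function.comp_apply,
    SupHomClass.map_sup, BotHomClass.map_bot]

namespace IsSubmodularRank

variable {ρ : α → ℝ} (hρ : IsSubmodularRank ρ)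

include hρ

theorem add_le_add_of_le {s t x y : α} (hs : s ≤ x ⊔ y) (ht : t ≤ x ⊓ y) :
    ρ s + ρ t ≤ ρ x + ρ y :=
  (add_le_add (hρ.monotone hs) (hρ.monotone ht)).trans (hρ.submodular x y)

theorem sub_le_condMutualInfo {a b z : α} (hza : z ≤ a) (hzb : z ≤ b) (c : α) :
    ρ (z ⊔ c) - ρ c ≤ condMutualInfo a b c ρ := by
  have h : ρ (a ⊔ b ⊔ c) + ρ (z ⊔ c) ≤ ρ (a ⊔ c) + ρ (b ⊔ c) :=
    hρ.add_le_add_of_le (sup_sup_distrib_right a b c).le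
      (le_inf (sup_le_sup_right hza c) (sup_le_sup_right hzb c))
  rw [condMutualInfo_apply]
  linarith

theorem sub_le_sub_of_le {c e : α} (hce : c ≤ e) (z : α) :
    ρ (z ⊔ e) - ρ e ≤ ρ (z ⊔ c) - ρ c := by
  have h : ρ (z ⊔ e) + ρ c ≤ ρ (z ⊔ c) + ρ e :=
    hρ.add_le_add_of_le (sup_le_sup_right le_sup_left e) (le_inf le_sup_right hce)
  linarith

theorem sub_le_add_condMutualInfo (z c d e : α) :
    ρ (z ⊔ e) - ρ e ≤ (ρ (z ⊔ c) - ρ c) + (ρ (z ⊔ d) - ρ d) + condMutualInfo c d e ρ := by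
  have hc : ρ (z ⊔ (c ⊔ e)) - ρ (c ⊔ e) ≤ ρ (z ⊔ c) - ρ c := hρ.sub_le_sub_of_le le_sup_left z
  have hd : ρ (z ⊔ (d ⊔ e)) - ρ (d ⊔ e) ≤ ρ (z ⊔ d) - ρ d := hρ.sub_le_sub_of_le le_sup_left z
  have hcd : ρ (c ⊔ d ⊔ e) + ρ (z ⊔ e) ≤ ρ (z ⊔ (c ⊔ e)) + ρ (z ⊔ (d ⊔ e)) :=
    hρ.add_le_add_of_le
      ((sup_sup_distrib_right c d e).le.trans (sup_le_sup le_sup_right le_sup_right))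
      (le_inf (sup_le_sup_left le_sup_right z) (sup_le_sup_left le_sup_right z))
  rw [condMutualInfo_apply]
  linarith

theorem sub_bot_le_add_condMutualInfo [OrderBot α] {a z : α} (hza : z ≤ a) (e : α) :
    ρ z - ρ ⊥ ≤ (ρ (z ⊔ e) - ρ e) + condMutualInfo a e ⊥ ρ := by
  have h : ρ (a ⊔ e) + ρ z ≤ ρ a + ρ (z ⊔ e) :=
    hρ.add_le_add_of_le (sup_le_sup_left le_sup_right a) (le_inf hza le_sup_left)
  rw [condMutualInfo_bot_apply]
  linarith

/-- The element `z` is a common information of `a` and `b`: it lies below both and its rank accounts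
for the whole of `I(a;b)`. -/
theorem dfzFunctional_nonneg [OrderBot α] {a b z : α} (hza : z ≤ a) (hzb : z ≤ b)
    (hz : condMutualInfo a b ⊥ ρ ≤ ρ z - ρ ⊥) (c d e : α) : 0 ≤ dfzFunctional a b c d e ρ := by
  rw [dfzFunctional_apply, sub_nonneg]
  calc condMutualInfo a b ⊥ ρ
      ≤ ρ z - ρ ⊥ := hz
    _ ≤ (ρ (z ⊔ e) - ρ e) + condMutualInfo a e ⊥ ρ := hρ.sub_bot_le_add_condMutualInfo hza e
    _ ≤ (ρ (z ⊔ c) - ρ c) + (ρ (z ⊔ d) - ρ d) + condMutualInfo c d e ρ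
          + condMutualInfo a e ⊥ ρ := by gcongr; exact hρ.sub_le_add_condMutualInfo z c d e
    _ ≤ condMutualInfo a b c ρ + condMutualInfo a b d ρ + condMutualInfo c d e ρ
          + condMutualInfo a e ⊥ ρ := by
        gcongr
        · exact hρ.sub_le_condMutualInfo hza hzb c
        · exact hρ.sub_le_condMutualInfo hza hzb d

end IsSubmodularRank

end SubmodularRank

section Representable

theorem isSubmodularRank_finrank (F W : Type*) [DivisionRing F] [AddCommGroup W] [Module F W]
    [FiniteDimensional F W] :
    IsSubmodularRank fun U : Submodule F W => (finrank F U : ℝ) where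
  monotone _ _ hUV := Nat.cast_le.mpr (Submodule.finrank_mono hUV)
  submodular U V := by exact_mod_cast (Submodule.finrank_sup_add_finrank_inf_eq U V).le

theorem dfzFunctional_finrank_nonneg {F W : Type*} [DivisionRing F] [AddCommGroup W] [Module F W]
    [FiniteDimensional F W] (A B C D E : Submodule F W) :
    0 ≤ dfzFunctional A B C D E fun U => (finrank F U : ℝ) := by
  refine (isSubmodularRank_finrank F W).dfzFunctional_nonneg inf_le_left inf_le_right ?_ C D E
  have h : (finrank F ↥(A ⊔ B) : ℝ) + finrank F ↥(A ⊓ B) = finrank F A + finrank F B := by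
    exact_mod_cast Submodule.finrank_sup_add_finrank_inf_eq A B
  rw [condMutualInfo_bot_apply]
  linarith

variable {X : Type}

theorem IsRepresentable.dfzFunctional_nonneg [DecidableEq X] {g : Finset X → ℝ}
    (hg : IsRepresentable g) (A B C D E : Finset X) : 0 ≤ dfzFunctional A B C D E g := by
  obtain ⟨⟨F, W, V, hV⟩⟩ := hg
  let span : SupBotHom (Finset X) (Submodule F W) :=
    { toFun := fun A => A.sup V
      map_sup' := fun _ _ => Finset.sup_union
      map_bot' := Finset.sup_empty }
  have hg : g = (fun U : Submodule F W => (finrank F U : ℝ)) ∘ span := funext hV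
  rw [hg, dfzFunctional_comp]
  exact dfzFunctional_finrank_nonneg _ _ _ _ _

theorem map_nonneg_of_mem_closure_coneHull {S : Set (Finset X → ℝ)}
    {L : (Finset X → ℝ) →L[ℝ] ℝ} (hL : ∀ g ∈ S, 0 ≤ L g) {h : Finset X → ℝ}
    (hh : h ∈ closure (coneHull S)) : 0 ≤ L h := by
  refine closure_minimal ?_ (isClosed_le continuous_const L.continuous) hh
  rintro _ ⟨m, c, f, hc, hf, rfl⟩
  simpa only [Set.mem_ofPred_eq, map_sum, map_smul, smul_eq_mul] using
    Finset.sum_nonneg fun i _ => mul_nonneg (hc i) (hL _ (hf i))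

theorem CcRepresentable.dfzFunctional_nonneg [DecidableEq X] {h : Finset X → ℝ}
    (hh : CcRepresentable h) (A B C D E : Finset X) : 0 ≤ dfzFunctional A B C D E h :=
  map_nonneg_of_mem_closure_coneHull (fun _ hg => hg.dfzFunctional_nonneg A B C D E) hh

end Representable

section Ingleton

variable {X : Type} [DecidableEq X]

theorem ingletonJ_swap_left (h : Finset X → ℝ) (A₁ A₂ A₃ A₄ : Finset X) :
    ingletonJ h A₂ A₁ A₃ A₄ = ingletonJ h A₁ A₂ A₃ A₄ := by
  simp only [ingletonJ, Finset.union_comm A₂ A₁]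
  ring

theorem ingletonJ_swap_right (h : Finset X → ℝ) (A₁ A₂ A₃ A₄ : Finset X) :
    ingletonJ h A₁ A₂ A₄ A₃ = ingletonJ h A₁ A₂ A₃ A₄ := by
  simp only [ingletonJ, Finset.union_comm A₄ A₃]
  ring

namespace IsPolymatroid

variable {h : Finset X → ℝ} (hh : IsPolymatroid h)

include hh

theorem isSubmodularRank : IsSubmodularRank h where
  monotone := hh.2.2.1
  submodular := hh.2.2.2

theorem insert_add_le_insert_add {A B : Finset X} (hAB : A ⊆ B) (x : X) :
    h (insert x B) + h A ≤ h (insert x A) + h B := by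
  simpa only [sub_le_sub_iff, Finset.sup_eq_union, Finset.singleton_union] using
    hh.isSubmodularRank.sub_le_sub_of_le hAB {x}

theorem ingletonJ_insert_le {A₁ A₂ A₃ A₄ : Finset X} {x : X}
    (hx : x ∈ A₁ ∩ A₂ ∪ A₁ ∩ A₃ ∪ A₁ ∩ A₄ ∪ A₂ ∩ A₃ ∪ A₂ ∩ A₄ ∪ A₃ ∩ A₄) :
    ingletonJ h (insert x A₁) (insert x A₂) (insert x A₃) (insert x A₄) ≤
      ingletonJ h A₁ A₂ A₃ A₄ := by
  have mono : ∀ A, h A ≤ h (insert x A) := fun A => hh.2.2.1 _ _ (Finset.subset_insert x A)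
  have marginal : ∀ A B, h (insert x (A ∪ B)) + h A ≤ h (insert x A) + h (A ∪ B) :=
    fun A B => hh.insert_add_le_insert_add Finset.subset_union_left x
  simp only [Finset.mem_union, Finset.mem_inter] at hx
  simp only [ingletonJ, ← Finset.insert_union_distrib]
  rcases hx with ((((hx | hx) | hx) | hx) | hx) | hx <;> obtain ⟨hi, hj⟩ := hx <;>
    simp only [Finset.insert_eq_of_mem, Finset.mem_union, hi, hj, true_or, or_true]
  · linarith [mono (A₃ ∪ A₄)]
  · linarith [marginal A₂ A₄]
  · linarith [marginal A₂ A₃]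
  · linarith [marginal A₁ A₄]
  · linarith [marginal A₁ A₃]
  · linarith [marginal A₁ A₂, mono A₂]

theorem ingletonJ_union_le {A₁ A₂ A₃ A₄ K : Finset X}
    (hK : K ⊆ A₁ ∩ A₂ ∪ A₁ ∩ A₃ ∪ A₁ ∩ A₄ ∪ A₂ ∩ A₃ ∪ A₂ ∩ A₄ ∪ A₃ ∩ A₄) :
    ingletonJ h (K ∪ A₁) (K ∪ A₂) (K ∪ A₃) (K ∪ A₄) ≤ ingletonJ h A₁ A₂ A₃ A₄ := by
  induction K using Finset.induction_on with
  | empty => simp only [Finset.empty_union, le_refl]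
  | insert x K _ ih =>
    obtain ⟨hx, hK⟩ := Finset.insert_subset_iff.mp hK
    simp only [Finset.insert_union]
    refine (hh.ingletonJ_insert_le ?_).trans (ih hK)
    grind

theorem ingletonJ_nonneg_of_subset_left {A₁ A₂ : Finset X} (h₁₂ : A₁ ⊆ A₂) (A₃ A₄ : Finset X) :
    0 ≤ ingletonJ h A₁ A₂ A₃ A₄ := by
  have h₃₄ : h (A₃ ∪ A₄) + h A₁ ≤ h (A₁ ∪ A₃) + h (A₁ ∪ A₄) :=
    hh.isSubmodularRank.add_le_add_of_le (sup_le_sup le_sup_right le_sup_right)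
      (le_inf le_sup_left le_sup_left)
  rw [ingletonJ, Finset.union_eq_right.mpr h₁₂]
  linarith

theorem ingletonJ_nonneg_of_subset_right {A₃ A₄ : Finset X} (h₃₄ : A₃ ⊆ A₄) (A₁ A₂ : Finset X) :
    0 ≤ ingletonJ h A₁ A₂ A₃ A₄ := by
  have h₁₂₃ : h (A₁ ∪ A₂ ∪ A₃) + h A₁ ≤ h (A₁ ∪ A₂) + h (A₁ ∪ A₃) :=
    hh.isSubmodularRank.add_le_add_of_le (sup_le_sup_left le_sup_right _)
      (le_inf le_sup_left le_sup_left)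
  have h₁₂₄ : h (A₁ ∪ A₂ ∪ A₄) + h A₄ ≤ h (A₁ ∪ A₄) + h (A₂ ∪ A₄) :=
    hh.isSubmodularRank.add_le_add_of_le (sup_sup_distrib_right A₁ A₂ A₄).le
      (le_inf le_sup_right le_sup_right)
  have h₂₃ : h A₂ ≤ h (A₂ ∪ A₃) := hh.2.2.1 _ _ Finset.subset_union_left
  rw [ingletonJ, Finset.union_eq_right.mpr h₃₄]
  linarith

/-- `K` is the kernel of the sunflower and `P₁, P₂, P₃, P₄` are its petals. -/
theorem isIngletonian_of_sunflower
    (hJ : ∀ K P₁ P₂ P₃ P₄ : Finset X, P₁.Nonempty → P₂.Nonempty → P₃.Nonempty → P₄.Nonempty →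
      Disjoint P₁ P₂ → Disjoint (P₁ ∪ P₂) P₃ → Disjoint (P₁ ∪ P₂ ∪ P₃) P₄ →
      Disjoint (P₁ ∪ P₂ ∪ P₃ ∪ P₄) K → 0 ≤ ingletonJ h (K ∪ P₁) (K ∪ P₂) (K ∪ P₃) (K ∪ P₄)) :
    IsIngletonian h := by
  intro A₁ A₂ A₃ A₄
  set K := A₁ ∩ A₂ ∪ A₁ ∩ A₃ ∪ A₁ ∩ A₄ ∪ A₂ ∩ A₃ ∪ A₂ ∩ A₄ ∪ A₃ ∩ A₄ with hK
  refine le_trans ?_ (hh.ingletonJ_union_le hK.le)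
  have subset_of_empty : ∀ {A : Finset X} (B : Finset X), ¬ (A \ K).Nonempty → K ∪ A ⊆ K ∪ B := by
    intro A B hA
    rw [Finset.not_nonempty_iff_eq_empty, Finset.sdiff_eq_empty_iff_subset] at hA
    exact Finset.union_subset Finset.subset_union_left (hA.trans Finset.subset_union_left)
  by_cases h₁ : (A₁ \ K).Nonempty
  swap
  · exact hh.ingletonJ_nonneg_of_subset_left (subset_of_empty A₂ h₁) _ _
  by_cases h₂ : (A₂ \ K).Nonempty
  swap
  · rw [← ingletonJ_swap_left]
    exact hh.ingletonJ_nonneg_of_subset_left (subset_of_empty A₁ h₂) _ _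
  by_cases h₃ : (A₃ \ K).Nonempty
  swap
  · exact hh.ingletonJ_nonneg_of_subset_right (subset_of_empty A₄ h₃) _ _
  by_cases h₄ : (A₄ \ K).Nonempty
  swap
  · rw [← ingletonJ_swap_right]
    exact hh.ingletonJ_nonneg_of_subset_right (subset_of_empty A₃ h₄) _ _
  simpa only [Finset.union_sdiff_self_eq_union] using
    hJ K (A₁ \ K) (A₂ \ K) (A₃ \ K) (A₄ \ K) h₁ h₂ h₃ h₄ (Finset.disjoint_left.mpr (by grind))
      (Finset.disjoint_left.mpr (by grind)) (Finset.disjoint_left.mpr (by grind))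
      (Finset.disjoint_left.mpr (by grind))

end IsPolymatroid

end Ingleton

section Configuration

/-- The ranks of the impossible configuration of lines `a = 0`, `b = 1` and planes `c = 2`, `d = 3`,
`e = 4` in dimension `5`. Two of these span a plane if they are `a` and `b`, the whole space if they
are `e` and one of the lines or `c` and `d`, and rank `4` otherwise; any three span the space. -/
def configRank (A : Finset (Fin 5)) : ℕ :=
  if A = ∅ then 0
  else if A ⊆ {0, 1} then A.card + 1
  else if A = {0, 4} ∨ A = {1, 4} ∨ A = {2, 3} then 5
  else min (A.card + 2) 5

theorem configRank_mono_and_submodular : ∀ A B : Finset (Fin 5),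
    configRank A ≤ configRank (A ∪ B) ∧
      configRank (A ∪ B) + configRank (A ∩ B) ≤ configRank A + configRank B := by
  decide +kernel

theorem configRank_ingleton_of_sunflower : ∀ P₁ : Finset (Fin 5), P₁.Nonempty →
    ∀ P₂ : Finset (Fin 5), P₂.Nonempty → Disjoint P₁ P₂ →
    ∀ P₃ : Finset (Fin 5), P₃.Nonempty → Disjoint (P₁ ∪ P₂) P₃ →
    ∀ P₄ : Finset (Fin 5), P₄.Nonempty → Disjoint (P₁ ∪ P₂ ∪ P₃) P₄ →
    ∀ K : Finset (Fin 5), Disjoint (P₁ ∪ P₂ ∪ P₃ ∪ P₄) K →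
      configRank (K ∪ P₁) + configRank (K ∪ P₂) + configRank (K ∪ P₃ ∪ (K ∪ P₄))
          + configRank (K ∪ P₁ ∪ (K ∪ P₂) ∪ (K ∪ P₃)) + configRank (K ∪ P₁ ∪ (K ∪ P₂) ∪ (K ∪ P₄)) ≤
        configRank (K ∪ P₁ ∪ (K ∪ P₂)) + configRank (K ∪ P₁ ∪ (K ∪ P₃))
          + configRank (K ∪ P₁ ∪ (K ∪ P₄)) + configRank (K ∪ P₂ ∪ (K ∪ P₃))
          + configRank (K ∪ P₂ ∪ (K ∪ P₄)) := by
  decide +kernel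

theorem isPolymatroid_configRank : IsPolymatroid fun A => (configRank A : ℝ) := by
  refine ⟨Nat.cast_zero, fun A => Nat.cast_nonneg _, fun A B hAB => Nat.cast_le.mpr ?_,
    fun A B => ?_⟩
  · simpa only [Finset.union_eq_right.mpr hAB] using (configRank_mono_and_submodular A B).1
  · beta_reduce
    exact_mod_cast (configRank_mono_and_submodular A B).2

theorem isIngletonian_configRank : IsIngletonian fun A => (configRank A : ℝ) := by
  refine isPolymatroid_configRank.isIngletonian_of_sunflower ?_
  intro K P₁ P₂ P₃ P₄ h₁ h₂ h₃ h₄ h₁₂ h₁₂₃ h₁₂₃₄ hK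
  have h := (Nat.cast_le (α := ℝ)).mpr
    (configRank_ingleton_of_sunflower P₁ h₁ P₂ h₂ h₁₂ P₃ h₃ h₁₂₃ P₄ h₄ h₁₂₃₄ K hK)
  push_cast at h
  rw [ingletonJ]
  linarith

theorem dfzFunctional_configRank :
    dfzFunctional {0} {1} {2} {3} {4} (fun A => (configRank A : ℝ)) = -1 := by
  have hI : ∀ a b c : Finset (Fin 5), condMutualInfo a b c (fun A => (configRank A : ℝ)) =
      ((configRank (a ∪ c) + configRank (b ∪ c) - configRank (a ∪ b ∪ c) - configRank c : ℤ) : ℝ) :=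
    fun a b c => by push_cast; rfl
  simp only [dfzFunctional_apply, hI]
  exact_mod_cast (by decide +kernel)

end Configuration

/-- insufficiency of Ingleton's inequalities: there is a finite ground
set and an Ingletonian polymatroid on it that is not cc-representable; consequently
there is a linear inequality valid for all representable polymatroids on that ground
set which is violated by this Ingletonian polymatroid (hence not implied by the
polymatroid axioms together with Ingleton's inequalities). -/
theorem exists_ingletonian_not_cc_representable :
    ∃ (n : ℕ) (h : Finset (Fin n) → ℝ),
      IsPolymatroid h ∧ IsIngletonian h ∧ ¬ CcRepresentable h ∧
      ∃ c : Finset (Fin n) → ℝ,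
        (∀ g : Finset (Fin n) → ℝ, IsRepresentable g →
          0 ≤ ∑ A : Finset (Fin n), c A * g A) ∧
        ∑ A : Finset (Fin n), c A * h A < 0 := by
  set L : (Finset (Fin 5) → ℝ) →L[ℝ] ℝ := dfzFunctional {0} {1} {2} {3} {4}
  have sum_eq (g : Finset (Fin 5) → ℝ) : ∑ A, L (Pi.single A 1) * g A = L g := by
    conv_rhs => rw [pi_eq_sum_univ' g, map_sum]
    simp [mul_comm]
  have hL : L (fun A => (configRank A : ℝ)) < 0 := by
    rw [show L _ = -1 from dfzFunctional_configRank]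
    norm_num
  refine ⟨5, fun A => configRank A, isPolymatroid_configRank, isIngletonian_configRank,
    fun hcc => (hcc.dfzFunctional_nonneg _ _ _ _ _).not_gt hL, fun A => L (Pi.single A 1),
    fun g hg => ?_, ?_⟩
  · exact (hg.dfzFunctional_nonneg _ _ _ _ _).trans_eq (sum_eq g).symm
  · exact (sum_eq _).trans_lt hL
end

section
/- Let Z_1,…,Z_5, V_1,…,V_8 be subspaces of a finite-dimensional vector space over a finite field of characteristic 2 satisfying: dim⟨Z_1,…,Z_5⟩ = ∑_{i=1}^5 dim Z_i; V_1 ⊆ ⟨Z_1,Z_2,Z_3⟩; V_2 ⊆ ⟨Z_3,Z_4,Z_5⟩; V_3 ⊆ ⟨Z_1,Z_2⟩; V_4 ⊆ ⟨Z_1,Z_3⟩; V_5 ⊆ ⟨Z_2,Z_3⟩; V_6 ⊆ ⟨Z_3,Z_4⟩; V_7 ⊆ ⟨Z_3,Z_5⟩; V_8 ⊆ ⟨Z_4,Z_5⟩; Z_1 ⊆ ⟨V_1,V_5⟩; Z_2 ⊆ ⟨V_1,V_4⟩; Z_3 ⊆ ⟨V_1,V_3⟩; Z_3 ⊆ ⟨V_3,V_4,V_5,V_6,V_7,V_8⟩;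 Z_3 ⊆ ⟨V_2,V_8⟩; Z_4 ⊆ ⟨V_2,V_7⟩; and Z_5 ⊆ ⟨V_2,V_6⟩. Then 11·min(dim Z_1,…,dim Z_5) ≤ 10·max(dim V_1,…,dim V_8). -/
open Module

/-!
Project onto the summands of `Z₁ ⊕ Z₂ ⊕ Z₃` with complete orthogonal idempotents `e₁`, `e₂`, `e₃`.
When `Wᵢ ≤ ker eᵢ`, a decoding condition `Zᵢ ≤ V + Wᵢ` says that `eᵢ` maps
`Aᵢ = {v ∈ V | v - eᵢ v ∈ Wᵢ}` onto `Zᵢ`, so `Aᵢ` is large and the `Aᵢ` overlap inside `V`.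
In characteristic 2 the identity `1 - e₁ = (1 - e₂) + (1 - e₃)` turns elements of
`A₁ ∩ A₂ ∩ A₃` into dependencies among the `Wᵢ`. This bounds `dim (W₁ + W₂ + W₃)` from above, while
images of sums and intersections of the `Aᵢ` bound it from below. Comparing the two bounds limits
the part of `Z₃` that the `Wᵢ` can span. The network consists of two such systems which share only
`Z₃`, and their parts of `Z₃` must together span all of `Z₃`. Adding up gives
`2z₁ + 2z₂ + 3z₃ + 2z₄ + 2z₅ ≤ 2v₁ + 2v₂ + v₃ + ⋯ + v₈` for the dimensions, with total weights 11
and 10.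
-/

theorem inf_sup_inf_eq_of_disjoint {α : Type*} [Lattice α] [OrderBot α] [IsModularLattice α]
    {P Q X Y Z : α} (hXY : Disjoint X Y) (hPX : P ≤ X) (hQ : Q ≤ Z ⊔ Y) (hZX : Z ≤ X)
    (hZ : Z ≤ P ⊔ Q) : P ⊓ Z ⊔ Q ⊓ Z = Z := by
  refine le_antisymm (sup_le inf_le_right inf_le_right) ?_
  have hQX : Q ⊓ X ≤ Z :=
    calc Q ⊓ X ≤ (Z ⊔ Y) ⊓ X := inf_le_inf_right X hQ
      _ = Z ⊔ Y ⊓ X := sup_inf_assoc_of_le Y hZX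
      _ = Z := by rw [hXY.symm.eq_bot, sup_bot_eq]
  have hZPQ : Z ≤ P ⊔ Q ⊓ Z :=
    calc Z ≤ (P ⊔ Q) ⊓ X := le_inf hZ hZX
      _ = P ⊔ Q ⊓ X := sup_inf_assoc_of_le Q hPX
      _ ≤ P ⊔ Q ⊓ Z := sup_le_sup_left (le_inf inf_le_left hQX) P
  calc Z ≤ (Q ⊓ Z ⊔ P) ⊓ Z := le_inf (sup_comm P _ ▸ hZPQ) le_rfl
    _ = Q ⊓ Z ⊔ P ⊓ Z := sup_inf_assoc_of_le P inf_le_right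
    _ = P ⊓ Z ⊔ Q ⊓ Z := sup_comm _ _

section FiniteDimensional

variable {K M M' : Type*} [DivisionRing K] [AddCommGroup M] [Module K M] [AddCommGroup M']
  [Module K M'] [FiniteDimensional K M]

theorem finrank_map_add_finrank_inf_ker (f : M →ₗ[K] M') (S : Submodule K M) :
    finrank K (S.map f) + finrank K ↥(S ⊓ LinearMap.ker f) = finrank K S := by
  rw [← LinearMap.finrank_range_add_finrank_ker (f.domRestrict S), LinearMap.range_domRestrict,
    LinearMap.ker_domRestrict, ← Submodule.map_comap_subtype, Submodule.finrank_map_subtype_eq]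

theorem finrank_add_finrank_map_le (f : M →ₗ[K] M') {S T : Submodule K M} (hST : S ≤ T) :
    finrank K S + finrank K (T.map f) ≤ finrank K (S.map f) + finrank K T := by
  have hker : finrank K ↥(S ⊓ LinearMap.ker f) ≤ finrank K ↥(T ⊓ LinearMap.ker f) :=
    Submodule.finrank_mono (inf_le_inf_right _ hST)
  have hS := finrank_map_add_finrank_inf_ker f S
  have hT := finrank_map_add_finrank_inf_ker f T
  lia

theorem iSupIndep_of_sum_finrank_le {ι : Type*} [Fintype ι] {Z : ι → Submodule K M}
    (h : ∑ i, finrank K (Z i) ≤ finrank K ↥(⨆ i, Z i)) : iSupIndep Z := by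
  classical
  let sumMap : (DirectSum ι fun i => Z i) →ₗ[K] M := DFinsupp.lsum ℕ fun i => (Z i).subtype
  have hle : ∑ i, finrank K (Z i) ≤ finrank K (LinearMap.range sumMap) := by
    rwa [Submodule.iSup_eq_range_dfinsupp_lsum] at h
  have hrange : finrank K (LinearMap.range sumMap) + finrank K (LinearMap.ker sumMap) =
      ∑ i, finrank K (Z i) := by
    rw [LinearMap.finrank_range_add_finrank_ker, finrank_directSum]
  have hker : LinearMap.ker sumMap = ⊥ := Submodule.finrank_eq_zero.mp (by lia)
  exact iSupIndep_of_dfinsupp_lsum_injective Z (LinearMap.ker_eq_bot.mp hker)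

end FiniteDimensional

section Idempotents

theorem completeOrthogonalIdempotents_update {R ι : Type*} [Ring R] [Fintype ι] [DecidableEq ι]
    {e : ι → R} (he : OrthogonalIdempotents e) (i₀ : ι) :
    CompleteOrthogonalIdempotents (Function.update e i₀ (e i₀ + (1 - ∑ i, e i))) := by
  have hleft (j : ι) : (1 - ∑ i, e i) * e j = 0 := by simp [sub_mul, Finset.sum_mul, he.mul_eq]
  have hright (j : ι) : e j * (1 - ∑ i, e i) = 0 := by simp [mul_sub, Finset.mul_sum, he.mul_eq]
  refine CompleteOrthogonalIdempotents.iff_ortho_complete.mpr ⟨fun i j hij => ?_, ?_⟩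
  · rcases eq_or_ne i i₀ with rfl | hi
    · simp [Function.update_of_ne hij.symm, add_mul, hleft, he.ortho hij]
    · rcases eq_or_ne j i₀ with rfl | hj
      · simp [Function.update_of_ne hij, mul_add, hright, he.ortho hij]
      · simp [hi, hj, he.ortho hij]
  · rw [Finset.sum_update_of_mem (Finset.mem_univ i₀), add_right_comm,
      ← Finset.sum_eq_add_sum_sdiff_singleton_of_mem (Finset.mem_univ i₀), add_sub_cancel]

variable {K M ι : Type*} [DivisionRing K] [AddCommGroup M] [Module K M]

theorem exists_orthogonalIdempotents_of_iSupIndep {Z : ι → Submodule K M} (hZ : iSupIndep Z) :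
    ∃ e : ι → End K M, OrthogonalIdempotents e ∧ ∀ i, LinearMap.range (e i) = Z i := by
  choose C hC hCompl using fun i => (hZ i).symm.exists_isCompl
  refine ⟨fun i => (Z i).projection (C i) (hCompl i).symm,
    ⟨fun i => Submodule.isIdempotentElem_projection _, fun i j hij => ?_⟩, fun i => by simp⟩
  ext x
  have hmem : (Z j).projection (C j) (hCompl j).symm x ∈ C i :=
    hC i (le_iSup₂ (f := fun j _ => Z j) j hij.symm (Submodule.projection_apply_mem _ x))
  simpa using hmem

theorem exists_completeOrthogonalIdempotents_of_iSupIndep [Fintype ι] [Nonempty ι]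
    {Z : ι → Submodule K M} (hZ : iSupIndep Z) :
    ∃ e : ι → End K M, CompleteOrthogonalIdempotents e ∧ ∀ i, Z i ≤ LinearMap.range (e i) := by
  classical
  obtain ⟨e, he, hrange⟩ := exists_orthogonalIdempotents_of_iSupIndep hZ
  obtain ⟨i₀⟩ := ‹Nonempty ι›
  refine ⟨_, completeOrthogonalIdempotents_update he i₀, fun i => ?_⟩
  rw [← hrange i]
  rcases eq_or_ne i i₀ with rfl | hi
  · have hfactor : e i = (e i + (1 - ∑ j, e j)) * e i := by
      simp [add_mul, sub_mul, Finset.sum_mul, he.mul_eq]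
    rw [Function.update_self]
    nth_rw 1 [hfactor]
    exact LinearMap.range_comp_le_range (e i) _
  · rw [Function.update_of_ne hi]

end Idempotents

section Decodable

variable {R M : Type*} [Ring R] [AddCommGroup M] [Module R M]

/-- The elements of `V` from which the component `e v` can be decoded with the help of `W`, in the
sense that `v` and `e v` agree modulo `W`. -/
def decodable (e : End R M) (V W : Submodule R M) : Submodule R M :=
  V ⊓ W.comap (1 - e)

variable {e f : End R M} {V W Z : Submodule R M}

theorem decodable_le : decodable e V W ≤ V :=
  inf_le_left

theorem le_map_decodable (he : IsIdempotentElem e) (hZe : Z ≤ LinearMap.range e)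
    (hWe : W ≤ LinearMap.ker e) (hZ : Z ≤ V ⊔ W) : Z ≤ (decodable e V W).map e := by
  intro z hz
  have hez : e z = z := (LinearMap.IsIdempotentElem.mem_range_iff he).mp (hZe hz)
  obtain ⟨v, hv, w, hw, rfl⟩ := Submodule.mem_sup.mp (hZ hz)
  have hev : e v = v + w := by simpa [LinearMap.mem_ker.mp (hWe hw)] using hez
  exact ⟨v, ⟨hv, by simpa [hev] using hw⟩, hev⟩

theorem map_decodable_le_map (hfe : f * e = 0) : (decodable e V W).map f ≤ W.map f := by
  rintro _ ⟨x, hx, rfl⟩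
  have hfex : f (e x) = 0 := LinearMap.congr_fun hfe x
  exact ⟨x - e x, hx.2, by rw [map_sub, hfex, sub_zero]⟩

end Decodable

section ThreeSources

variable {K M : Type*} [DivisionRing K] [AddCommGroup M] [Module K M] [FiniteDimensional K M]
  {e : Fin 3 → End K M} {V : Submodule K M} {W Z : Fin 3 → Submodule K M}

theorem finrank_inf_decodable_add_finrank_sup_le [CharP K 2]
    (he : CompleteOrthogonalIdempotents e) :
    finrank K ↥(decodable (e 0) V (W 0) ⊓ (decodable (e 1) V (W 1) ⊓ decodable (e 2) V (W 2))) +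
      finrank K ↥(W 0 ⊔ W 1 ⊔ W 2) ≤ finrank K (W 0) + finrank K (W 1) + finrank K (W 2) := by
  set T := decodable (e 0) V (W 0) ⊓ (decodable (e 1) V (W 1) ⊓ decodable (e 2) V (W 2))
  have himage : T.map (1 - e 0) ≤ (W 1 ⊔ W 2) ⊓ W 0 := by
    rintro _ ⟨x, ⟨hx₀, hx₁, hx₂⟩, rfl⟩
    have hsum : e 0 x + e 1 x + e 2 x = x := by
      simpa [Fin.sum_univ_three] using LinearMap.congr_fun he.complete x
    have hdouble : e 0 x + e 0 x = 0 := by rw [← two_smul K, CharTwo.two_eq_zero, zero_smul]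
    have hsplit : (1 - e 0) x = (1 - e 1) x + (1 - e 2) x :=
      calc x - e 0 x = x + e 0 x := by rw [sub_eq_add_neg, neg_eq_of_add_eq_zero_left hdouble]
        _ = (x - e 1 x) + (x - e 2 x) := by nth_rw 3 [← hsum]; abel
    exact ⟨hsplit ▸ Submodule.add_mem_sup hx₁.2 hx₂.2, hx₀.2⟩
  have hkernel : T ⊓ LinearMap.ker (1 - e 0) ≤ W 1 ⊓ W 2 := by
    rintro x ⟨⟨-, hx₁, hx₂⟩, hx⟩
    have hfix : e 0 x = x := (sub_eq_zero.mp hx).symm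
    have hzero {i : Fin 3} (hi : i ≠ 0) : e i x = 0 := by
      rw [← hfix]
      exact LinearMap.congr_fun (he.ortho hi) x
    exact ⟨by simpa [hzero] using hx₁.2, by simpa [hzero] using hx₂.2⟩
  have hT := finrank_map_add_finrank_inf_ker (1 - e 0) T
  have hW₁₂ := Submodule.finrank_sup_add_finrank_inf_eq (W 1) (W 2)
  have hW := Submodule.finrank_sup_add_finrank_inf_eq (W 1 ⊔ W 2) (W 0)
  rw [sup_comm, ← sup_assoc] at hW
  have := Submodule.finrank_mono himage
  have := Submodule.finrank_mono hkernel
  lia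

theorem finrank_map_decodable_add_finrank_inf_le (he : OrthogonalIdempotents e)
    (hZe : Z 2 ≤ LinearMap.range (e 2)) (hWe : ∀ i, W i ≤ LinearMap.ker (e i)) :
    finrank K ((decodable (e 1) V (W 1) ⊔ decodable (e 2) V (W 2)).map (e 0)) +
        finrank K ((decodable (e 0) V (W 0) ⊔
          decodable (e 1) V (W 1) ⊓ decodable (e 2) V (W 2)).map (e 1)) +
        finrank K ↥((W 0 ⊔ W 1 ⊔ W 2) ⊓ Z 2) ≤
      finrank K ↥(W 0 ⊔ W 1 ⊔ W 2) := by
  set P := W 0 ⊔ W 1 ⊔ W 2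
  have hW₀ : W 0 ≤ P := le_sup_left.trans le_sup_left
  have hW₁ : W 1 ≤ P := le_sup_right.trans le_sup_left
  have hW₂ : W 2 ≤ P := le_sup_right
  have himage₀ : (decodable (e 1) V (W 1) ⊔ decodable (e 2) V (W 2)).map (e 0) ≤ P.map (e 0) := by
    rw [Submodule.map_sup]
    exact sup_le ((map_decodable_le_map (he.ortho (by decide))).trans (Submodule.map_mono hW₁))
      ((map_decodable_le_map (he.ortho (by decide))).trans (Submodule.map_mono hW₂))
  have himage₁ : (decodable (e 0) V (W 0) ⊔ decodable (e 1) V (W 1) ⊓ decodable (e 2) V (W 2)).map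
      (e 1) ≤ (P ⊓ LinearMap.ker (e 0)).map (e 1) := by
    rw [Submodule.map_sup]
    refine sup_le ((map_decodable_le_map (he.ortho (by decide))).trans
      (Submodule.map_mono (le_inf hW₀ (hWe 0)))) ?_
    rintro _ ⟨x, ⟨hx₁, hx₂⟩, rfl⟩
    have hmul (i j : Fin 3) : e i (e j x) = if i = j then e i x else 0 := by
      have := LinearMap.congr_fun (he.mul_eq i j) x
      split_ifs at this ⊢ <;> exact this
    -- The difference of the two decoding errors of `x` is `e 1 x - e 2 x`, which `e 0` kills.
    refine ⟨(x - e 2 x) - (x - e 1 x), ⟨sub_mem (hW₂ hx₂.2) (hW₁ hx₁.2), ?_⟩, ?_⟩ <;>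
      simp [hmul]
  have hZ : P ⊓ Z 2 ≤ P ⊓ LinearMap.ker (e 0) ⊓ LinearMap.ker (e 1) := by
    have hker {i : Fin 3} (hi : i ≠ 2) : Z 2 ≤ LinearMap.ker (e i) :=
      hZe.trans (LinearMap.range_le_ker_iff.mpr (he.ortho hi))
    exact le_inf (inf_le_inf_left P (hker (by decide))) (inf_le_right.trans (hker (by decide)))
  have hP := finrank_map_add_finrank_inf_ker (e 0) P
  have hPker := finrank_map_add_finrank_inf_ker (e 1) (P ⊓ LinearMap.ker (e 0))
  have := Submodule.finrank_mono himage₀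
  have := Submodule.finrank_mono himage₁
  have := Submodule.finrank_mono hZ
  lia

theorem three_source_finrank_inequality [CharP K 2] (hind : iSupIndep Z)
    (hW : ∀ i, W i ≤ Z (i + 1) ⊔ Z (i + 2)) (hZ : ∀ i, Z i ≤ V ⊔ W i) :
    finrank K ↥((W 0 ⊔ W 1 ⊔ W 2) ⊓ Z 2) + 2 * finrank K (Z 0) + 2 * finrank K (Z 1) +
        finrank K (Z 2) ≤
      2 * finrank K V + finrank K (W 0) + finrank K (W 1) + finrank K (W 2) := by
  obtain ⟨e, he, hZe⟩ := exists_completeOrthogonalIdempotents_of_iSupIndep hind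
  have hZker {i j : Fin 3} (hij : i ≠ j) : Z j ≤ LinearMap.ker (e i) :=
    (hZe j).trans (LinearMap.range_le_ker_iff.mpr (he.ortho hij))
  have hWe (i : Fin 3) : W i ≤ LinearMap.ker (e i) :=
    (hW i).trans (sup_le (hZker (by simp)) (hZker (by simp)))
  let A : Fin 3 → Submodule K M := fun i => decodable (e i) V (W i)
  have hAV (i : Fin 3) : A i ≤ V := decodable_le
  have hZA (i : Fin 3) : Z i ≤ (A i).map (e i) :=
    le_map_decodable (he.idem i) (hZe i) (hWe i) (hZ i)
  have hfinrankA (i : Fin 3) : finrank K (Z i) ≤ finrank K (A i) :=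
    (Submodule.finrank_mono (hZA i)).trans (Submodule.finrank_map_le (e i) (A i))
  have hfinrankV (i : Fin 3) : finrank K (Z i) ≤ finrank K (V.map (e i)) :=
    Submodule.finrank_mono ((hZA i).trans (Submodule.map_mono (hAV i)))
  have hloss₀ := finrank_add_finrank_map_le (e 0) (sup_le (hAV 1) (hAV 2))
  have hloss₁ := finrank_add_finrank_map_le (e 1)
    (sup_le (hAV 0) (inf_le_of_left_le (b := A 2) (hAV 1)))
  have hA₁₂ := Submodule.finrank_sup_add_finrank_inf_eq (A 1) (A 2)
  have hA := Submodule.finrank_sup_add_finrank_inf_eq (A 0) (A 1 ⊓ A 2)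
  have hupper : finrank K ↥(A 0 ⊓ (A 1 ⊓ A 2)) + finrank K ↥(W 0 ⊔ W 1 ⊔ W 2) ≤
      finrank K (W 0) + finrank K (W 1) + finrank K (W 2) :=
    finrank_inf_decodable_add_finrank_sup_le he
  have hlower : finrank K ((A 1 ⊔ A 2).map (e 0)) + finrank K ((A 0 ⊔ A 1 ⊓ A 2).map (e 1)) +
      finrank K ↥((W 0 ⊔ W 1 ⊔ W 2) ⊓ Z 2) ≤ finrank K ↥(W 0 ⊔ W 1 ⊔ W 2) :=
    finrank_map_decodable_add_finrank_inf_le he.1 (hZe 2) hWe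
  have := hfinrankA 0
  have := hfinrankA 1
  have := hfinrankA 2
  have := hfinrankV 0
  have := hfinrankV 1
  omega

end ThreeSources

section SecondNetwork

variable {K M : Type*} [DivisionRing K] [CharP K 2] [AddCommGroup M] [Module K M]
  [FiniteDimensional K M]

theorem second_network_finrank_inequality
    (Z1 Z2 Z3 Z4 Z5 V1 V2 V3 V4 V5 V6 V7 V8 : Submodule K M)
    (hind : iSupIndep ![Z1, Z2, Z3, Z4, Z5])
    (hV3 : V3 ≤ Z1 ⊔ Z2) (hV4 : V4 ≤ Z1 ⊔ Z3) (hV5 : V5 ≤ Z2 ⊔ Z3)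
    (hV6 : V6 ≤ Z3 ⊔ Z4) (hV7 : V7 ≤ Z3 ⊔ Z5) (hV8 : V8 ≤ Z4 ⊔ Z5)
    (hZ1 : Z1 ≤ V1 ⊔ V5) (hZ2 : Z2 ≤ V1 ⊔ V4) (hZ3a : Z3 ≤ V1 ⊔ V3)
    (hZ3b : Z3 ≤ V3 ⊔ V4 ⊔ V5 ⊔ V6 ⊔ V7 ⊔ V8) (hZ3c : Z3 ≤ V2 ⊔ V8)
    (hZ4 : Z4 ≤ V2 ⊔ V7) (hZ5 : Z5 ≤ V2 ⊔ V6) :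
    2 * finrank K Z1 + 2 * finrank K Z2 + 3 * finrank K Z3 + 2 * finrank K Z4 +
        2 * finrank K Z5 ≤
      2 * finrank K V1 + 2 * finrank K V2 + finrank K V3 + finrank K V4 + finrank K V5 +
        finrank K V6 + finrank K V7 + finrank K V8 := by
  have hindP : iSupIndep ![Z1, Z2, Z3] := by
    convert hind.comp (f := ![0, 1, 2]) (by decide) using 1
    ext i : 1
    fin_cases i <;> rfl
  have hindQ : iSupIndep ![Z4, Z5, Z3] := by
    convert hind.comp (f := ![3, 4, 2]) (by decide) using 1
    ext i : 1
    fin_cases i <;> rfl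
  have hP : finrank K ↥((V5 ⊔ V4 ⊔ V3) ⊓ Z3) + 2 * finrank K Z1 + 2 * finrank K Z2 +
      finrank K Z3 ≤ 2 * finrank K V1 + finrank K V5 + finrank K V4 + finrank K V3 :=
    three_source_finrank_inequality (Z := ![Z1, Z2, Z3]) (W := ![V5, V4, V3]) hindP
      (by simp [Fin.forall_fin_succ, hV3, hV4, hV5, sup_comm])
      (by simp [Fin.forall_fin_succ, hZ1, hZ2, hZ3a])
  have hQ : finrank K ↥((V7 ⊔ V6 ⊔ V8) ⊓ Z3) + 2 * finrank K Z4 + 2 * finrank K Z5 +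
      finrank K Z3 ≤ 2 * finrank K V2 + finrank K V7 + finrank K V6 + finrank K V8 :=
    three_source_finrank_inequality (Z := ![Z4, Z5, Z3]) (W := ![V7, V6, V8]) hindQ
      (by simp [Fin.forall_fin_succ, hV6, hV7, hV8, sup_comm])
      (by simp [Fin.forall_fin_succ, hZ3c, hZ4, hZ5])
  have hdisj : Disjoint (Z1 ⊔ Z2 ⊔ Z3) (Z4 ⊔ Z5) := by
    simpa [sup_assoc] using hind.sup_indep_univ.disjoint_sup_sup (u := {0, 1, 2}) (v := {3, 4})
      (by simp) (by simp) (by decide)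
  have hfirst : V5 ⊔ V4 ⊔ V3 ≤ Z1 ⊔ Z2 ⊔ Z3 :=
    sup_le (sup_le (hV5.trans (sup_le_sup_right le_sup_right Z3))
      (hV4.trans (sup_le_sup_right le_sup_left Z3))) (hV3.trans le_sup_left)
  have hsecond : V7 ⊔ V6 ⊔ V8 ≤ Z3 ⊔ (Z4 ⊔ Z5) :=
    sup_le (sup_le (hV7.trans (sup_le_sup_left le_sup_right Z3))
      (hV6.trans (sup_le_sup_left le_sup_left Z3))) (hV8.trans le_sup_right)
  have hsplit : (V5 ⊔ V4 ⊔ V3) ⊓ Z3 ⊔ (V7 ⊔ V6 ⊔ V8) ⊓ Z3 = Z3 :=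
    inf_sup_inf_eq_of_disjoint hdisj hfirst hsecond le_sup_right (hZ3b.trans_eq (by ac_rfl))
  have hZ3 := Submodule.finrank_add_le_finrank_add_finrank
    ((V5 ⊔ V4 ⊔ V3) ⊓ Z3) ((V7 ⊔ V6 ⊔ V8) ⊓ Z3)
  rw [hsplit] at hZ3
  omega

theorem dfz_second_network_general
    (Z1 Z2 Z3 Z4 Z5 V1 V2 V3 V4 V5 V6 V7 V8 : Submodule K M)
    (hind : finrank K ↥(Z1 ⊔ Z2 ⊔ Z3 ⊔ Z4 ⊔ Z5)
      = finrank K ↥Z1 + finrank K ↥Z2 + finrank K ↥Z3 + finrank K ↥Z4 + finrank K ↥Z5)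
    (hV3 : V3 ≤ Z1 ⊔ Z2) (hV4 : V4 ≤ Z1 ⊔ Z3) (hV5 : V5 ≤ Z2 ⊔ Z3)
    (hV6 : V6 ≤ Z3 ⊔ Z4) (hV7 : V7 ≤ Z3 ⊔ Z5) (hV8 : V8 ≤ Z4 ⊔ Z5)
    (hZ1 : Z1 ≤ V1 ⊔ V5) (hZ2 : Z2 ≤ V1 ⊔ V4) (hZ3a : Z3 ≤ V1 ⊔ V3)
    (hZ3b : Z3 ≤ V3 ⊔ V4 ⊔ V5 ⊔ V6 ⊔ V7 ⊔ V8) (hZ3c : Z3 ≤ V2 ⊔ V8)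
    (hZ4 : Z4 ≤ V2 ⊔ V7) (hZ5 : Z5 ≤ V2 ⊔ V6) :
    11 * min (min (min (min (finrank K ↥Z1) (finrank K ↥Z2)) (finrank K ↥Z3))
          (finrank K ↥Z4)) (finrank K ↥Z5)
      ≤ 10 * max (max (max (max (max (max (max (finrank K ↥V1) (finrank K ↥V2))
          (finrank K ↥V3)) (finrank K ↥V4)) (finrank K ↥V5)) (finrank K ↥V6))
          (finrank K ↥V7)) (finrank K ↥V8) := by
  have hindep : iSupIndep ![Z1, Z2, Z3, Z4, Z5] := iSupIndep_of_sum_finrank_le <| by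
    have hsup : ⨆ i, ![Z1, Z2, Z3, Z4, Z5] i = Z1 ⊔ Z2 ⊔ Z3 ⊔ Z4 ⊔ Z5 := by
      simp [← Finset.sup_univ_eq_iSup, Fin.univ_succ, sup_assoc]
    rw [hsup, hind, Fin.sum_univ_five]
    exact le_rfl
  have hrank := second_network_finrank_inequality Z1 Z2 Z3 Z4 Z5 V1 V2 V3 V4 V5 V6 V7 V8 hindep
    hV3 hV4 hV5 hV6 hV7 hV8 hZ1 hZ2 hZ3a hZ3b hZ3c hZ4 hZ5
  generalize hz : (min (min _ _) _ : ℕ) = z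
  generalize hv : (max (max _ _) _ : ℕ) = v
  replace hz := hz.ge
  replace hv := hv.le
  simp only [le_min_iff, max_le_iff] at hz hv
  lia

end SecondNetwork

/-- Dougherty–Freiling–Zeger, second network: for subspaces
`Z_1, …, Z_5, V_1, …, V_8` over a finite field of characteristic 2 satisfying the
listed independence and containment conditions,
`min(dim Z_i) / max(dim V_j) ≤ 10/11`, i.e.
`11·min(dim Z_1, …, dim Z_5) ≤ 10·max(dim V_1, …, dim V_8)`. -/
theorem dfz_second_network {K M : Type} [Field K] [Fintype K] [CharP K 2]
    [AddCommGroup M] [Module K M] [FiniteDimensional K M]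
    (Z1 Z2 Z3 Z4 Z5 V1 V2 V3 V4 V5 V6 V7 V8 : Submodule K M)
    (hind : finrank K ↥(Z1 ⊔ Z2 ⊔ Z3 ⊔ Z4 ⊔ Z5)
      = finrank K ↥Z1 + finrank K ↥Z2 + finrank K ↥Z3 + finrank K ↥Z4 + finrank K ↥Z5)
    (hV1 : V1 ≤ Z1 ⊔ Z2 ⊔ Z3) (hV2 : V2 ≤ Z3 ⊔ Z4 ⊔ Z5)
    (hV3 : V3 ≤ Z1 ⊔ Z2) (hV4 : V4 ≤ Z1 ⊔ Z3) (hV5 : V5 ≤ Z2 ⊔ Z3)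
    (hV6 : V6 ≤ Z3 ⊔ Z4) (hV7 : V7 ≤ Z3 ⊔ Z5) (hV8 : V8 ≤ Z4 ⊔ Z5)
    (hZ1 : Z1 ≤ V1 ⊔ V5) (hZ2 : Z2 ≤ V1 ⊔ V4) (hZ3a : Z3 ≤ V1 ⊔ V3)
    (hZ3b : Z3 ≤ V3 ⊔ V4 ⊔ V5 ⊔ V6 ⊔ V7 ⊔ V8) (hZ3c : Z3 ≤ V2 ⊔ V8)
    (hZ4 : Z4 ≤ V2 ⊔ V7) (hZ5 : Z5 ≤ V2 ⊔ V6) :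
    11 * min (min (min (min (finrank K ↥Z1) (finrank K ↥Z2)) (finrank K ↥Z3))
          (finrank K ↥Z4)) (finrank K ↥Z5)
      ≤ 10 * max (max (max (max (max (max (max (finrank K ↥V1) (finrank K ↥V2))
          (finrank K ↥V3)) (finrank K ↥V4)) (finrank K ↥V5)) (finrank K ↥V6))
          (finrank K ↥V7)) (finrank K ↥V8) :=
  dfz_second_network_general Z1 Z2 Z3 Z4 Z5 V1 V2 V3 V4 V5 V6 V7 V8 hind hV3 hV4 hV5 hV6 hV7 hV8
    hZ1 hZ2 hZ3a hZ3b hZ3c hZ4 hZ5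
end
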